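/- arXiv:2602.22838 — 2 statements merged into one kernel-verified Lean document; each statement's English description precedes it below -/
import Mathlib

section
/- For every integer k with 0 ≤ k < ⌈(n−1)/2⌉, the Plurality social choice correspondence is not k-augmentation strategyproof: there exist a profile ≻ with n voters, a voter i, a manipulation ≻'_i, and a tie-breaker τ such that Plur_τ(≻'_i, ≻_{−i}) ≻_i Plur_τ(≻ + k(≻_i)). Combined with the matching upper bound, the manipulation potential of Plurality is exactly ⌈(n−1)/2⌉. -/
open Finset

/-- A strict linear preference order over `m` candidates, encoded as the permutation sending
each candidate to its rank; rank `0` is the most preferred position, so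
`c ≻ c'` iff `p c < p c'`. -/
abbrev Pref (m : ℕ) := Equiv.Perm (Fin m)

/-- A profile of `N` voters, each with a strict preference over `m` candidates. -/
abbrev Profile (m N : ℕ) := Fin N → Pref m

/-- A social choice correspondence: for each number `N` of voters, it maps each `N`-voter
profile to a set of (tied) winners. -/
abbrev SCC (m : ℕ) := (N : ℕ) → Profile m N → Finset (Fin m)

/-- The profile `P` with `k` extra copies of voter `i`'s preference appended. -/
def addCopies {m n : ℕ} (P : Profile m n) (i : Fin n) (k : ℕ) : Profile m (n + k) :=
  fun j => if h : (j : ℕ) < n then P ⟨j, h⟩ else P i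

/-- Break a tie among the candidates in `A` using the linear tie-breaking order `τ`:
the winner is the `τ`-maximal (lowest `τ`-rank) element of `A`. -/
noncomputable def tiebreak {m : ℕ} [NeZero m] (τ : Pref m) (A : Finset (Fin m)) : Fin m :=
  if h : A.Nonempty then τ.symm ((A.image (fun c => τ c)).min' (h.image _)) else 0

/-- `F` is `k`-augmentation strategyproof on `n`-voter profiles: for every tie-breaker `τ`,
profile `P`, voter `i`, and alternative preference `q`, voter `i` weakly prefers the outcome
obtained by adding `k` truthful copies of her vote to the outcome of the manipulation `q`. -/
def kASP (m n : ℕ) [NeZero m] (F : SCC m) (k : ℕ) : Prop :=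
  ∀ (τ : Pref m) (P : Profile m n) (i : Fin n) (q : Pref m),
    (P i) (tiebreak τ (F (n + k) (addCopies P i k))) ≤
      (P i) (tiebreak τ (F n (Function.update P i q)))

/-- The manipulation potential of `F` on `n`-voter profiles: the least `k` such that `F` is
`k'`-augmentation strategyproof for all `k' ≥ k`, and `⊤` (i.e. `∞`) if no such `k` exists. -/
noncomputable def manipPot (m n : ℕ) [NeZero m] (F : SCC m) : ℕ∞ :=
  sInf ((fun k : ℕ => (k : ℕ∞)) '' {k : ℕ | ∀ k' : ℕ, k ≤ k' → kASP m n F k'})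

/-- The number of voters ranking candidate `c` first. -/
def pluralityScore {m N : ℕ} [NeZero m] (P : Profile m N) (c : Fin m) : ℕ :=
  (Finset.univ.filter (fun i => P i c = 0)).card

/-- Plurality: the winners are the candidates ranked first by the most voters. -/
def plurality (m : ℕ) [NeZero m] : SCC m := fun _ P =>
  Finset.univ.filter (fun c => ∀ c', pluralityScore P c' ≤ pluralityScore P c)

/-! The threshold is `⌈(n - 1) / 2⌉ = ⌊n / 2⌋`.

*Upper bound.* If voter `i` does not get her favourite after `k ≥ ⌊n / 2⌋` copies of her vote are
added, the winner `w` beats or ties her favourite despite those copies, so `w` has at least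
`⌊n / 2⌋ + 1` first places among the original voters, none of them hers. This absolute majority
survives any manipulation.

*Lower bound.* Let voter `i` rank `a` first and `b` above `c`, and let the other voters split
between `b` and `c` as evenly as possible, `c` receiving the odd vote. With the right tie-breaker,
voting for `b` makes `b` win, whereas `k < ⌊n / 2⌋` extra votes for `a` leave `c` the winner. -/

section Tiebreak

variable {m : ℕ} [NeZero m] {τ : Pref m} {A : Finset (Fin m)} {c : Fin m}

theorem tiebreak_mem (τ : Pref m) (hA : A.Nonempty) : tiebreak τ A ∈ A := by
  obtain ⟨x, hx, hmin⟩ := mem_image.1 ((A.image fun c => τ c).min'_mem (hA.image _))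
  rw [tiebreak, dif_pos hA, ← hmin, τ.symm_apply_apply]
  exact hx

theorem apply_tiebreak_le (hc : c ∈ A) : τ (tiebreak τ A) ≤ τ c := by
  rw [tiebreak, dif_pos ⟨c, hc⟩, τ.apply_symm_apply]
  exact min'_le _ _ (mem_image_of_mem _ hc)

end Tiebreak

section TopPair

variable {m : ℕ} {b c : Fin m}

theorem exists_pref_lt_and_forall_lt (h : b ≠ c) :
    ∃ τ : Pref m, τ b < τ c ∧ ∀ d, d ≠ b → d ≠ c → τ c < τ d := by
  have : Nontrivial (Fin m) := ⟨b, c, h⟩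
  have hm : 1 < m := Fin.nontrivial_iff_two_le.1 this
  obtain ⟨τ, hb, hc⟩ := MulAction.is_two_pretransitive_iff.1
    (Equiv.Perm.isMultiplyPretransitive (Fin m) 2) (c := ⟨0, by lia⟩)
    (d := ⟨1, hm⟩) h (by simp)
  rw [Equiv.Perm.smul_def] at hb hc
  refine ⟨τ, by simp [hb, hc], fun d hdb hdc => ?_⟩
  have h0 := τ.injective.ne hdb
  have h1 := τ.injective.ne hdc
  rw [hb, ne_eq, Fin.ext_iff] at h0
  rw [hc] at h1 ⊢
  grind

theorem exists_pref_lt_iff_and_forall_lt (h : b ≠ c) (R : Prop) :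
    ∃ τ : Pref m, (τ b < τ c ↔ R) ∧ ∀ d, d ≠ b → d ≠ c → τ b < τ d ∧ τ c < τ d := by
  by_cases hR : R
  · obtain ⟨τ, hlt, hrest⟩ := exists_pref_lt_and_forall_lt h
    exact ⟨τ, iff_of_true hlt hR, fun d hdb hdc =>
      ⟨hlt.trans (hrest d hdb hdc), hrest d hdb hdc⟩⟩
  · obtain ⟨τ, hlt, hrest⟩ := exists_pref_lt_and_forall_lt h.symm
    exact ⟨τ, iff_of_false hlt.not_gt hR, fun d hdb hdc =>
      ⟨hrest d hdc hdb, hlt.trans (hrest d hdc hdb)⟩⟩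

end TopPair

section PluralityScore

variable {m n : ℕ} [NeZero m]

theorem pluralityScore_pos {P : Profile m n} {i : Fin n} {c : Fin m} (h : P i c = 0) :
    0 < pluralityScore P c :=
  card_pos.2 ⟨i, mem_filter.2 ⟨mem_univ i, h⟩⟩

theorem pluralityScore_add_pluralityScore_le (P : Profile m n) {c d : Fin m} (h : c ≠ d) :
    pluralityScore P c + pluralityScore P d ≤ n := by
  have hdisj : Disjoint (univ.filter fun i => P i c = 0) (univ.filter fun i => P i d = 0) :=
    disjoint_filter.2 fun i _ hc hd => h ((P i).injective (hc.trans hd.symm))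
  rw [pluralityScore, pluralityScore, ← card_union_of_disjoint hdisj]
  exact card_finset_fin_le _

theorem pluralityScore_addCopies (P : Profile m n) (i : Fin n) (k : ℕ) (c : Fin m) :
    pluralityScore (addCopies P i k) c = pluralityScore P c + if P i c = 0 then k else 0 := by
  simp only [pluralityScore, card_filter, Fin.sum_univ_add]
  simp [addCopies]

theorem pluralityScore_update_add (P : Profile m n) (i : Fin n) (q : Pref m) (c : Fin m) :
    pluralityScore (Function.update P i q) c + (if P i c = 0 then 1 else 0) =
      pluralityScore P c + if q c = 0 then 1 else 0 := by
  have hrest (j : {j // j ≠ i}) : Function.update P i q j = P j := Function.update_of_ne j.2 ..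
  simp only [pluralityScore, card_filter, Fintype.sum_eq_add_sum_subtype_ne _ i,
    Function.update_self, hrest]
  ring

end PluralityScore

section PluralityWinner

variable {m N : ℕ} [NeZero m] {P : Profile m N} {c : Fin m}

theorem mem_plurality : c ∈ plurality m N P ↔ ∀ d, pluralityScore P d ≤ pluralityScore P c := by
  simp [plurality]

theorem plurality_nonempty (P : Profile m N) : (plurality m N P).Nonempty :=
  let ⟨c, hc⟩ := Finite.exists_max (pluralityScore P)
  ⟨c, mem_plurality.2 hc⟩

theorem pluralityScore_le_tiebreak_plurality (τ : Pref m) (P : Profile m N) (d : Fin m) :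
    pluralityScore P d ≤ pluralityScore P (tiebreak τ (plurality m N P)) :=
  mem_plurality.1 (tiebreak_mem τ (plurality_nonempty P)) d

theorem tiebreak_plurality_eq {τ : Pref m}
    (h : ∀ d, d ≠ c → pluralityScore P d < pluralityScore P c ∨
      pluralityScore P d = pluralityScore P c ∧ τ c < τ d) :
    tiebreak τ (plurality m N P) = c := by
  have hscore (d : Fin m) : pluralityScore P d ≤ pluralityScore P c := by
    rcases eq_or_ne d c with rfl | hd
    · exact le_rfl
    · exact (h d hd).elim le_of_lt fun hd => hd.1.le
  by_contra hw
  rcases h _ hw with hlt | ⟨-, hlt⟩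
  · exact hlt.not_ge (pluralityScore_le_tiebreak_plurality τ P c)
  · exact hlt.not_ge (apply_tiebreak_le (mem_plurality.2 hscore))

theorem tiebreak_plurality_eq_of_majority (τ : Pref m) (h : N < 2 * pluralityScore P c) :
    tiebreak τ (plurality m N P) = c :=
  tiebreak_plurality_eq fun d hd => by
    have := pluralityScore_add_pluralityScore_le P hd
    lia

end PluralityWinner

theorem kASP_plurality_of_half_le {m n k : ℕ} [NeZero m] (hk : n / 2 ≤ k) :
    kASP m n (plurality m) k := by
  intro τ P i q
  have hwin := pluralityScore_le_tiebreak_plurality τ (addCopies P i k) ((P i).symm 0)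
  generalize tiebreak τ (plurality m (n + k) (addCopies P i k)) = w at hwin ⊢
  have htop : P i ((P i).symm 0) = 0 := (P i).apply_symm_apply 0
  by_cases hw : P i w = 0
  · exact hw ▸ Fin.zero_le _
  have hmajority : n < 2 * pluralityScore P w := by
    have := pluralityScore_pos htop
    simp only [pluralityScore_addCopies, htop, hw, if_true, if_false] at hwin
    lia
  have hkeep : pluralityScore P w ≤ pluralityScore (Function.update P i q) w := by
    have := pluralityScore_update_add P i q w
    rw [if_neg hw] at this
    lia
  have hmajority' : n < 2 * pluralityScore (Function.update P i q) w := by lia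
  rw [tiebreak_plurality_eq_of_majority τ hmajority']

theorem swap_apply_eq_left_iff {α : Type*} [DecidableEq α] {a b x : α} :
    Equiv.swap a b x = a ↔ x = b := by
  rw [Equiv.swap_apply_eq_iff, Equiv.swap_apply_left]

/-- Voter `i` is pivotal between `b` and `c`: she prefers `b` to `c`, but wastes her vote on a third
candidate, while the other `n - 1` voters split as evenly as possible between `b` and `c`, with the
odd vote going to `c`. Only `i` votes for a third candidate, of which we record `score_le_one`. -/
structure IsPivotal {m n : ℕ} [NeZero m] (P : Profile m n) (i : Fin n) (b c : Fin m) : Prop where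
  pos : 0 < P i b
  lt : P i b < P i c
  score_left : pluralityScore P b = (n - 1) / 2
  score_right : pluralityScore P c = n / 2
  score_le_one : ∀ d, d ≠ b → d ≠ c → pluralityScore P d ≤ 1

section Pivotal

variable {m n : ℕ} [NeZero m] {b c : Fin m}

theorem exists_isPivotal {p : Pref m} (i : Fin n) (hb : 0 < p b) (hbc : p b < p c) :
    ∃ P : Profile m n, IsPivotal P i b c := by
  have hne : b ≠ c := fun h => hbc.ne (congrArg p h)
  have hcard : #(univ.erase i) = n - 1 := by simp
  obtain ⟨T, hT, hTcard⟩ := exists_subset_card_eq (s := univ.erase i) (n := n / 2) (by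
    have := i.pos
    lia)
  have hiT : i ∉ T := fun h => notMem_erase i univ (hT h)
  let P : Profile m n := fun j => if j = i then p else Equiv.swap 0 (if j ∈ T then c else b)
  have hPi : P i = p := if_pos rfl
  have hP {j : Fin n} (hj : j ≠ i) (d : Fin m) : P j d = 0 ↔ d = if j ∈ T then c else b := by
    simp only [P, if_neg hj, swap_apply_eq_left_iff]
  refine ⟨P, hPi ▸ hb, hPi ▸ hbc, ?_, ?_, fun d hdb hdc => ?_⟩
  · have hvotes : (univ.filter fun j => P j b = 0) = univ.erase i \ T := by
      ext j
      rcases eq_or_ne j i with rfl | hj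
      · simp [hPi, hb.ne']
      · by_cases hjT : j ∈ T <;> simp [hP hj, hj, hjT, hne]
    rw [pluralityScore, hvotes, card_sdiff_of_subset hT, hcard, hTcard]
    lia
  · have hvotes : (univ.filter fun j => P j c = 0) = T := by
      ext j
      rcases eq_or_ne j i with rfl | hj
      · simp [hPi, (hb.trans hbc).ne', hiT]
      · by_cases hjT : j ∈ T <;> simp [hP hj, hjT, hne.symm]
    rw [pluralityScore, hvotes, hTcard]
  · refine (card_le_card fun j hj => mem_singleton.2 ?_).trans_eq (card_singleton i)
    by_contra hji
    have := (hP hji d).1 (mem_filter.1 hj).2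
    split_ifs at this <;> contradiction

variable {P : Profile m n} {i : Fin n} {τ : Pref m}

-- The role of `hτ`: for even `n` the pivotal vote creates a tie, which `b` must win; for odd `n` it
-- breaks a tie, which `c` must win.
theorem IsPivotal.tiebreak_addCopies {k : ℕ} (h : IsPivotal P i b c) (hk : k < n / 2)
    (hτ : τ b < τ c ↔ Even n) (hτc : ∀ d, d ≠ b → d ≠ c → τ c < τ d) :
    tiebreak τ (plurality m (n + k) (addCopies P i k)) = c := by
  have hb := h.score_left
  have hc := h.score_right
  refine tiebreak_plurality_eq fun d hdc => ?_
  rw [pluralityScore_addCopies, pluralityScore_addCopies, if_neg (h.pos.trans h.lt).ne']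
  rcases eq_or_ne d b with rfl | hdb
  · have := τ.injective.ne hdc
    rw [if_neg h.pos.ne']
    grind
  · have := h.score_le_one d hdb hdc
    have := hτc d hdb hdc
    split_ifs <;> lia

theorem IsPivotal.tiebreak_update {q : Pref m} (h : IsPivotal P i b c) (hq : q b = 0)
    (hτ : τ b < τ c ↔ Even n) (hτb : ∀ d, d ≠ b → d ≠ c → τ b < τ d) :
    tiebreak τ (plurality m n (Function.update P i q)) = b := by
  have hbscore : pluralityScore (Function.update P i q) b = (n - 1) / 2 + 1 := by
    have := pluralityScore_update_add P i q b
    rwa [if_neg h.pos.ne', if_pos hq, h.score_left] at this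
  refine tiebreak_plurality_eq fun d hdb => ?_
  have hle : pluralityScore (Function.update P i q) d ≤ pluralityScore P d := by
    have := pluralityScore_update_add P i q d
    have hqd : q d ≠ 0 := fun hd => hdb (q.injective (hd.trans hq.symm))
    rw [if_neg hqd] at this
    lia
  rw [hbscore]
  rcases eq_or_ne d c with rfl | hdc
  · rw [h.score_right] at hle
    grind
  · have := h.score_le_one d hdb hdc
    have := hτb d hdb hdc
    lia

end Pivotal

theorem not_kASP_plurality_of_lt_half {m n k : ℕ} [NeZero m] (hm : 3 ≤ m) (hk : k < n / 2) :
    ¬ kASP m n (plurality m) k := by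
  intro hASP
  let i : Fin n := ⟨0, by lia⟩
  obtain ⟨b, c, hb, hbc⟩ : ∃ b c : Fin m, 0 < b ∧ b < c :=
    ⟨⟨1, by lia⟩, ⟨2, by lia⟩, Fin.lt_def.2 (by simp), Fin.lt_def.2 (by simp)⟩
  obtain ⟨P, hP⟩ := exists_isPivotal (p := 1) i hb hbc
  obtain ⟨τ, hτ, htop⟩ := exists_pref_lt_iff_and_forall_lt hbc.ne (Even n)
  have hle := hASP τ P i (Equiv.swap 0 b)
  rw [hP.tiebreak_addCopies hk hτ fun d hdb hdc => (htop d hdb hdc).2,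
    hP.tiebreak_update (Equiv.swap_apply_right 0 b) hτ fun d hdb hdc => (htop d hdb hdc).1] at hle
  exact hP.lt.not_ge hle

theorem kASP_plurality_iff {m n k : ℕ} [NeZero m] (hm : 3 ≤ m) :
    kASP m n (plurality m) k ↔ n / 2 ≤ k :=
  ⟨fun h => not_lt.1 fun hk => not_kASP_plurality_of_lt_half hm hk h, kASP_plurality_of_half_le⟩

theorem manipPot_eq_of_kASP_iff {m n K : ℕ} [NeZero m] {F : SCC m}
    (h : ∀ k, kASP m n F k ↔ K ≤ k) : manipPot m n F = K := by
  refine IsLeast.csInf_eq ⟨⟨K, fun k hk => (h k).2 hk, rfl⟩, ?_⟩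
  rintro _ ⟨k, hk, rfl⟩
  exact Nat.cast_le.2 ((h k).1 (hk k le_rfl))

/-- For every `k < ⌈(n−1)/2⌉`, Plurality is not `k`-augmentation
strategyproof; combined with the matching upper bound, `Φ(Plur) = ⌈(n−1)/2⌉`. -/
theorem plurality_manipPot_eq (m n : ℕ) [NeZero m] (hm : 3 ≤ m) (hn : 2 ≤ n) :
    (∀ k : ℕ, k < (n - 1 + 1) / 2 → ¬ kASP m n (plurality m) k) ∧
      manipPot m n (plurality m) = (((n - 1 + 1) / 2 : ℕ) : ℕ∞) := by
  rw [show n - 1 + 1 = n by lia]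
  exact ⟨fun k hk => not_kASP_plurality_of_lt_half hm hk,
    manipPot_eq_of_kASP_iff fun _ => kASP_plurality_iff hm⟩
end

section
/- Assume m ≥ 4, n ≥ 5, and n−1 is divisible by 4. Then for every integer k with 0 ≤ k < n−1, the Instant Runoff social choice correspondence is not k-augmentation strategyproof: there exist a profile with n voters, a voter i, a manipulation, and a tie-breaker under which the manipulation yields a strictly better outcome for voter i than adding k truthful copies of her vote. Since Instant Runoff is majority-consistent, its manipulation potential is exactly n−1. -/
open Finset

/-- The number of voters whose most preferred candidate among the remaining set `A` is `c`. -/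
def restrScore {m N : ℕ} (P : Profile m N) (A : Finset (Fin m)) (c : Fin m) : ℕ :=
  (Finset.univ.filter (fun i => ∀ c' ∈ A, P i c ≤ P i c')).card

/-- Instant-runoff winners among the remaining candidates `A`, with parallel-universes
tiebreaking: iteratively, some candidate with the fewest first-place votes among `A`
is eliminated, and a candidate wins if it survives under some sequence of eliminations. -/
def irvAux {m N : ℕ} (P : Profile m N) (A : Finset (Fin m)) : Finset (Fin m) :=
  if _h : A.card ≤ 1 then A
  else
    ((A.filter (fun e => ∀ c ∈ A, restrScore P A e ≤ restrScore P A c)).attach).biUnion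
      (fun e => irvAux P (A.erase e.1))
termination_by A.card
decreasing_by
  exact Finset.card_erase_lt_of_mem (Finset.mem_filter.mp e.2).1

/-- Instant Runoff with parallel-universes tiebreaking. -/
def irv (m : ℕ) : SCC m := fun _ P => irvAux P Finset.univ

/-!
Once there are `k ≥ n - 1` truthful copies, the manipulator's favourite has a strict majority and
wins, which bounds the potential from above.

For smaller `k`, take candidates `a, b, c, d`, a manipulator voting `a ≻ b ≻ c ≻ d`, and blocks of
voters `d ≻ b ≻ c ≻ a`, `c ≻ b ≻ d ≻ a`, `b ≻ d ≻ a ≻ c` and `a ≻ b ≻ c ≻ d`. If she votes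
`b ≻ a ≻ c ≻ d`, then `a` is eliminated first; its supporters move to `b`, who outlasts `c`,
inherits the votes of `c` and beats `d`. Her truthful copies instead keep `a` alive, so that `b` can
be eliminated first; its votes then go to `d`, who survives `c` and finally beats `a`. Further
candidates ranked below these four by everyone never receive a vote and can be deleted from the
start.
-/

section Score

variable {m N : ℕ} {P : Profile m N} {A B : Finset (Fin m)} {c e : Fin m}

theorem restrScore_anti (P : Profile m N) (c : Fin m) (hAB : A ⊆ B) :
    restrScore P B c ≤ restrScore P A c :=
  card_le_card <| monotone_filter_right _ fun _ _ h x hx ↦ h x (hAB hx)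

theorem restrScore_add_le (P : Profile m N) (hc : c ∈ A) (he : e ∈ A) (hne : c ≠ e) :
    restrScore P A c + restrScore P A e ≤ N := by
  have hdisj : Disjoint (univ.filter fun i ↦ ∀ x ∈ A, P i c ≤ P i x)
      (univ.filter fun i ↦ ∀ x ∈ A, P i e ≤ P i x) :=
    disjoint_filter.2 fun i _ hci hei ↦ hne <| (P i).injective <| (hci e he).antisymm (hei c hc)
  calc restrScore P A c + restrScore P A e = _ := (card_union_of_disjoint hdisj).symm
    _ ≤ N := (card_le_univ _).trans_eq (Fintype.card_fin N)

theorem restrScore_eq_zero_iff : restrScore P A c = 0 ↔ ∀ i, ∃ x ∈ A, P i x < P i c := by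
  simp [restrScore, filter_eq_empty_iff]

theorem exists_restrScore_pos (P : Profile m N) (hN : 0 < N) (hA : A.Nonempty) :
    ∃ c ∈ A, 0 < restrScore P A c := by
  obtain ⟨c, hc, htop⟩ := exists_min_image A (P ⟨0, hN⟩) hA
  exact ⟨c, hc, card_pos.2 ⟨⟨0, hN⟩, mem_filter.2 ⟨mem_univ _, htop⟩⟩⟩

theorem restrScore_erase_of_eq_zero (he : restrScore P A e = 0) (c : Fin m) :
    restrScore P (A.erase e) c = restrScore P A c := by
  refine le_antisymm ?_ (restrScore_anti P c (erase_subset e A))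
  refine card_le_card <| monotone_filter_right _ fun i _ hci x hx ↦ ?_
  obtain ⟨y, hy, hye⟩ := restrScore_eq_zero_iff.1 he i
  rcases eq_or_ne x e with rfl | hxe
  · exact (hci y (mem_erase.2 ⟨ne_of_apply_ne (P i) hye.ne, hy⟩)).trans hye.le
  · exact hci x (mem_erase.2 ⟨hxe, hx⟩)

@[simp]
theorem restrScore_append {N' : ℕ} (P : Profile m N) (Q : Profile m N') (A : Finset (Fin m))
    (c : Fin m) : restrScore (Fin.append P Q) A c = restrScore P A c + restrScore Q A c := by
  simp only [restrScore, card_filter, Fin.sum_univ_add, Fin.append_left, Fin.append_right]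

@[simp]
theorem restrScore_const (σ : Pref m) (N : ℕ) (A : Finset (Fin m)) (c : Fin m) :
    restrScore (fun _ : Fin N ↦ σ) A c = if ∀ x ∈ A, σ c ≤ σ x then N else 0 := by
  simp only [restrScore, filter_const]
  split_ifs <;> simp

@[simp]
theorem restrScore_snoc (P : Profile m N) (σ : Pref m) (A : Finset (Fin m)) (c : Fin m) :
    restrScore (Fin.snoc P σ : Profile m (N + 1)) A c =
      restrScore P A c + if ∀ x ∈ A, σ c ≤ σ x then 1 else 0 := by
  rw [← restrScore_const, ← restrScore_append, Fin.append_right_eq_snoc]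

theorem addCopies_eq_append (P : Profile m N) (i : Fin N) (k : ℕ) :
    addCopies P i k = Fin.append P fun _ ↦ P i := by
  funext j
  induction j using Fin.addCases <;> simp [addCopies]

@[simp]
theorem restrScore_addCopies (P : Profile m N) (i : Fin N) (k : ℕ) (A : Finset (Fin m))
    (c : Fin m) : restrScore (addCopies P i k) A c =
      restrScore P A c + if ∀ x ∈ A, P i c ≤ P i x then k else 0 := by
  rw [addCopies_eq_append, restrScore_append, restrScore_const]

theorem restrScore_map {m' : ℕ} (f : Fin m ↪ Fin m') {P : Profile m N} {P' : Profile m' N}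
    (hP : ∀ i x y, P' i (f x) ≤ P' i (f y) ↔ P i x ≤ P i y) (A : Finset (Fin m)) (c : Fin m) :
    restrScore P' (A.map f) (f c) = restrScore P A c := by
  simp only [restrScore, forall_mem_map, hP]

end Score

section InstantRunoff

variable {m N : ℕ} {P : Profile m N} {A S : Finset (Fin m)} {c e : Fin m}

/-- `e` has the fewest first-place votes among the candidates `A`, so that instant runoff may
eliminate it. -/
def IsPluralityLoser (P : Profile m N) (A : Finset (Fin m)) (e : Fin m) : Prop :=
  e ∈ A ∧ ∀ c ∈ A, restrScore P A e ≤ restrScore P A c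

theorem exists_isPluralityLoser (P : Profile m N) (hA : A.Nonempty) :
    ∃ e, IsPluralityLoser P A e :=
  exists_min_image A (restrScore P A) hA

theorem irvAux_of_card_le_one (P : Profile m N) (hA : #A ≤ 1) : irvAux P A = A := by
  rw [irvAux, dif_pos hA]

theorem mem_irvAux_iff (hA : 1 < #A) :
    c ∈ irvAux P A ↔ ∃ e, IsPluralityLoser P A e ∧ c ∈ irvAux P (A.erase e) := by
  rw [irvAux, dif_neg hA.not_ge]
  simp [IsPluralityLoser]

theorem irvAux_eq_of_forall_isPluralityLoser {W : Finset (Fin m)} (hA : 1 < #A)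
    (h : ∀ e, IsPluralityLoser P A e → irvAux P (A.erase e) = W) : irvAux P A = W := by
  obtain ⟨l, hl⟩ := exists_isPluralityLoser P (card_pos.1 (zero_lt_one.trans hA))
  ext c
  rw [mem_irvAux_iff hA]
  exact ⟨fun ⟨e, he, hc⟩ ↦ h e he ▸ hc, fun hc ↦ ⟨l, hl, (h l hl).symm ▸ hc⟩⟩

theorem irvAux_eq_erase_of_forall_lt (hA : 1 < #A) (he : e ∈ A)
    (h : ∀ c ∈ A, c ≠ e → restrScore P A e < restrScore P A c) :
    irvAux P A = irvAux P (A.erase e) :=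
  irvAux_eq_of_forall_isPluralityLoser hA fun l hl ↦ by
    have hle : l = e := by_contra fun hne ↦ (h l hl.1 hne).not_ge (hl.2 e he)
    rw [hle]

theorem irvAux_nonempty (P : Profile m N) (hA : A.Nonempty) : (irvAux P A).Nonempty := by
  induction A using Finset.strongInduction with
  | H A ih =>
    rcases le_or_gt #A 1 with hcard | hcard
    · rwa [irvAux_of_card_le_one P hcard]
    · obtain ⟨e, he⟩ := exists_isPluralityLoser P hA
      have hne : (A.erase e).Nonempty := (one_lt_card_iff_nontrivial.1 hcard).erase_nonempty
      obtain ⟨c, hc⟩ := ih _ (erase_ssubset he.1) hne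
      exact ⟨c, (mem_irvAux_iff hcard).2 ⟨e, he, hc⟩⟩

theorem irvAux_eq_singleton_of_majority (hc : c ∈ A) (hmaj : N < 2 * restrScore P A c) :
    irvAux P A = {c} := by
  induction A using Finset.strongInduction with
  | H A ih =>
    rcases le_or_gt #A 1 with hcard | hcard
    · rw [irvAux_of_card_le_one P hcard]
      exact (subset_singleton_iff'.2 fun x hx ↦ card_le_one.1 hcard x hx c hc).antisymm
        (singleton_subset_iff.2 hc)
    · refine irvAux_eq_of_forall_isPluralityLoser hcard fun e he ↦ ?_
      have hne : c ≠ e := by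
        rintro rfl
        obtain ⟨x, hx, hxc⟩ := exists_mem_ne hcard c
        have := restrScore_add_le P hc hx hxc.symm
        have := he.2 x hx
        omega
      exact ih _ (erase_ssubset he.1) (mem_erase.2 ⟨hne, hc⟩)
        (hmaj.trans_le (Nat.mul_le_mul_left 2 (restrScore_anti P c (erase_subset e A))))

theorem irvAux_erase_of_restrScore_eq_zero (hN : 0 < N) (he : e ∈ A)
    (h0 : restrScore P A e = 0) : irvAux P (A.erase e) = irvAux P A := by
  induction A using Finset.strongInduction generalizing e with
  | H A ih =>
    obtain ⟨c, hc, hpos⟩ := exists_restrScore_pos P hN ⟨e, he⟩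
    have hcard : 1 < #A := one_lt_card.2 ⟨c, hc, e, he, by rintro rfl; omega⟩
    refine (irvAux_eq_of_forall_isPluralityLoser hcard fun l hl ↦ ?_).symm
    rcases eq_or_ne l e with rfl | hle
    · rfl
    have hl0 : restrScore P A l = 0 := by have := hl.2 e he; omega
    calc irvAux P (A.erase l)
        = irvAux P ((A.erase l).erase e) :=
          (ih _ (erase_ssubset hl.1) (mem_erase.2 ⟨hle.symm, he⟩)
            ((restrScore_erase_of_eq_zero hl0 e).trans h0)).symm
      _ = irvAux P ((A.erase e).erase l) := by rw [erase_right_comm]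
      _ = irvAux P (A.erase e) :=
          ih _ (erase_ssubset he) (mem_erase.2 ⟨hle, hl.1⟩)
            ((restrScore_erase_of_eq_zero h0 l).trans hl0)

theorem irvAux_eq_of_subset_of_dominates (hN : 0 < N) (hSA : S ⊆ A)
    (h : ∀ i, ∀ e ∈ A, e ∉ S → ∃ s ∈ S, P i s < P i e) : irvAux P A = irvAux P S := by
  induction A using Finset.strongInduction with
  | H A ih =>
    rcases hSA.eq_or_ssubset with rfl | hss
    · rfl
    obtain ⟨e, he, heS⟩ := exists_of_ssubset hss
    have h0 : restrScore P A e = 0 := restrScore_eq_zero_iff.2 fun i ↦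
      (h i e he heS).imp fun _ hs ↦ ⟨hSA hs.1, hs.2⟩
    rw [← irvAux_erase_of_restrScore_eq_zero hN he h0]
    exact ih _ (erase_ssubset he) (subset_erase.2 ⟨hSA, heS⟩)
      fun i x hx ↦ h i x (mem_of_mem_erase hx)

theorem irvAux_map {m' : ℕ} (f : Fin m ↪ Fin m') {P : Profile m N} {P' : Profile m' N}
    (hP : ∀ i x y, P' i (f x) ≤ P' i (f y) ↔ P i x ≤ P i y) (A : Finset (Fin m)) :
    irvAux P' (A.map f) = (irvAux P A).map f := by
  induction A using Finset.strongInduction with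
  | H A ih =>
    rcases le_or_gt #A 1 with hcard | hcard
    · rw [irvAux_of_card_le_one P hcard, irvAux_of_card_le_one P' ((card_map f).trans_le hcard)]
    have hloser (e : Fin m) : IsPluralityLoser P' (A.map f) (f e) ↔ IsPluralityLoser P A e := by
      simp only [IsPluralityLoser, mem_map', forall_mem_map, restrScore_map f hP]
    ext c'
    rw [mem_irvAux_iff ((card_map f).symm ▸ hcard)]
    constructor
    · rintro ⟨e', he', hc'⟩
      obtain ⟨e, -, rfl⟩ := mem_map.1 he'.1
      have he := (hloser e).1 he'
      rw [← map_erase, ih _ (erase_ssubset he.1)] at hc'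
      obtain ⟨c, hc, rfl⟩ := mem_map.1 hc'
      exact mem_map_of_mem f ((mem_irvAux_iff hcard).2 ⟨e, he, hc⟩)
    · intro hc'
      obtain ⟨c, hc, rfl⟩ := mem_map.1 hc'
      obtain ⟨e, he, hce⟩ := (mem_irvAux_iff hcard).1 hc
      refine ⟨f e, (hloser e).2 he, ?_⟩
      rw [← map_erase, ih _ (erase_ssubset he.1)]
      exact mem_map_of_mem f hce

end InstantRunoff

section MajorityConsistent

variable {m n k r : ℕ}

/-- Majority consistency: a candidate ranked first by strictly more than half of the voters is the
unique winner. -/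
def MajorityConsistent (F : SCC m) : Prop :=
  ∀ (N : ℕ) (P : Profile m N) (c : Fin m), N < 2 * restrScore P univ c → F N P = {c}

theorem irv_majorityConsistent (m : ℕ) : MajorityConsistent (irv m) :=
  fun _ _ c hc ↦ irvAux_eq_singleton_of_majority (mem_univ c) hc

theorem tiebreak_singleton [NeZero m] (τ : Pref m) (c : Fin m) : tiebreak τ {c} = c := by
  simp [tiebreak]

theorem MajorityConsistent.kASP [NeZero m] {F : SCC m} (hF : MajorityConsistent F)
    (hk : n ≤ k + 1) : kASP m n F k := by
  intro τ P i q
  obtain ⟨c, hc⟩ := (P i).surjective 0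
  have htop : ∀ x ∈ univ, P i c ≤ P i x := fun x _ ↦ hc ▸ Fin.zero_le _
  have hpos : 0 < restrScore P univ c := card_pos.2 ⟨i, mem_filter.2 ⟨mem_univ i, htop⟩⟩
  have hscore := restrScore_addCopies P i k univ c
  rw [if_pos htop] at hscore
  rw [hF _ _ c (by omega), tiebreak_singleton, hc]
  exact Fin.zero_le _

theorem manipPot_eq_of_kASP [NeZero m] {F : SCC m} (hge : ∀ k, r ≤ k → kASP m n F k)
    (hlt : ∀ k < r, ¬ kASP m n F k) : manipPot m n F = r := by
  refine IsLeast.csInf_eq ⟨⟨r, hge, rfl⟩, ?_⟩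
  rintro _ ⟨k, hk, rfl⟩
  exact Nat.cast_le.2 <| le_of_not_gt fun hkr ↦ hlt k hkr (hk k le_rfl)

end MajorityConsistent

section Tiebreak

variable {m : ℕ} [NeZero m]

theorem tiebreak_eq_of_forall_le {τ : Pref m} {A : Finset (Fin m)} {c : Fin m} (hc : c ∈ A)
    (h : ∀ x ∈ A, τ c ≤ τ x) : tiebreak τ A = c := by
  rw [tiebreak, dif_pos ⟨c, hc⟩, Equiv.symm_apply_eq]
  refine le_antisymm (min'_le _ _ (mem_image_of_mem _ hc)) (le_min' _ _ _ ?_)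
  simpa only [forall_mem_image] using h

theorem tiebreak_map {m' : ℕ} [NeZero m'] (f : Fin m ↪ Fin m') {τ : Pref m} {τ' : Pref m'}
    (hτ : ∀ x y, τ' (f x) ≤ τ' (f y) ↔ τ x ≤ τ y) {A : Finset (Fin m)} (hA : A.Nonempty) :
    tiebreak τ' (A.map f) = f (tiebreak τ A) := by
  obtain ⟨c, hc, hmin⟩ := exists_min_image A τ hA
  rw [tiebreak_eq_of_forall_le hc hmin, tiebreak_eq_of_forall_le (mem_map_of_mem f hc)]
  simpa only [forall_mem_map, hτ] using hmin

end Tiebreak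

section Extend

variable {m m' n N k : ℕ}

/-- The preference over `m' ≥ m` candidates that ranks the first `m` of them according to `σ`, and
the others below these in their natural order. -/
def extendPref (h : m ≤ m') (σ : Pref m) : Pref m' :=
  σ.viaFintypeEmbedding (Fin.castLEEmb h)

theorem extendPref_castLE (h : m ≤ m') (σ : Pref m) (x : Fin m) :
    extendPref h σ (Fin.castLE h x) = Fin.castLE h (σ x) :=
  σ.viaFintypeEmbedding_apply_image (Fin.castLEEmb h) x

theorem extendPref_castLE_le_iff (h : m ≤ m') (σ : Pref m) (x y : Fin m) :
    extendPref h σ (Fin.castLE h x) ≤ extendPref h σ (Fin.castLE h y) ↔ σ x ≤ σ y := by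
  simp only [extendPref_castLE, Fin.castLE_le_castLE_iff]

theorem extendPref_castLE_lt (h : m ≤ m') (σ : Pref m) (x : Fin m) {e : Fin m'}
    (he : e ∉ Set.range (Fin.castLEEmb h)) :
    extendPref h σ (Fin.castLE h x) < extendPref h σ e := by
  have hme : m ≤ e := le_of_not_gt fun hlt ↦ he ⟨⟨e, hlt⟩, rfl⟩
  rw [extendPref_castLE, extendPref, Equiv.Perm.viaFintypeEmbedding_apply_notMem_range σ _ he]
  exact (σ x).isLt.trans_le hme

theorem irv_extendPref [NeZero m] (h : m ≤ m') (hN : 0 < N) (P : Profile m N) :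
    irv m' N (extendPref h ∘ P) = (irv m N P).map (Fin.castLEEmb h) :=
  calc irv m' N (extendPref h ∘ P)
      = irvAux (extendPref h ∘ P) (univ.map (Fin.castLEEmb h)) :=
        irvAux_eq_of_subset_of_dominates hN (subset_univ _) fun i _ _ he ↦
          ⟨_, mem_map_of_mem _ (mem_univ 0),
            extendPref_castLE_lt h (P i) 0 fun ⟨x, hx⟩ ↦ he (mem_map.2 ⟨x, mem_univ x, hx⟩)⟩
    _ = (irv m N P).map (Fin.castLEEmb h) :=
        irvAux_map _ (fun i ↦ extendPref_castLE_le_iff h (P i)) univ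

theorem addCopies_comp (f : Pref m → Pref m') (P : Profile m n) (i : Fin n) (k : ℕ) :
    addCopies (f ∘ P) i k = f ∘ addCopies P i k := by
  funext j
  exact (apply_dite f _ _ _).symm

theorem kASP.of_le [NeZero m] [NeZero m'] (h : m ≤ m') (hF : kASP m' n (irv m') k) :
    kASP m n (irv m) k := by
  intro τ P i q
  have hwinner {N : ℕ} (hN : 0 < N) (Q : Profile m N) :
      tiebreak (extendPref h τ) (irv m' N (extendPref h ∘ Q)) =
        Fin.castLE h (tiebreak τ (irv m N Q)) := by
    rw [irv_extendPref h hN]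
    exact tiebreak_map _ (extendPref_castLE_le_iff h τ) (irvAux_nonempty Q univ_nonempty)
  have hn : 0 < n := i.pos
  have hle := hF (extendPref h τ) (extendPref h ∘ P) i (extendPref h q)
  rw [addCopies_comp, ← Function.comp_update, hwinner (Nat.add_pos_left hn k), hwinner hn] at hle
  exact (extendPref_castLE_le_iff h (P i) _ _).1 hle

end Extend

section FourCandidates

-- The candidates `0, 1, 2, 3` are called `a, b, c, d`. In the definition of a ballot the second
-- vector lists the candidates from best to worst.

/-- The ballot `a ≻ b ≻ c ≻ d`. -/
def abcd : Pref 4 := 1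

/-- The ballot `b ≻ a ≻ c ≻ d`. -/
def bacd : Pref 4 := ⟨![1, 0, 2, 3], ![1, 0, 2, 3], by decide, by decide⟩

/-- The ballot `b ≻ d ≻ a ≻ c`. -/
def bdac : Pref 4 := ⟨![2, 0, 3, 1], ![1, 3, 0, 2], by decide, by decide⟩

/-- The ballot `c ≻ b ≻ d ≻ a`. -/
def cbda : Pref 4 := ⟨![3, 1, 0, 2], ![2, 1, 3, 0], by decide, by decide⟩

/-- The ballot `d ≻ b ≻ c ≻ a`. -/
def dbca : Pref 4 := ⟨![3, 1, 2, 0], ![3, 1, 2, 0], by decide, by decide⟩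

/-- The votes of everyone but the manipulator: `d`, `c`, `b`, `a` voters whose favourite is the
candidate of the same name. -/
def blockProfile (d c b a : ℕ) : Profile 4 (d + c + b + a) :=
  Fin.append (Fin.append (Fin.append (fun _ ↦ dbca) fun _ ↦ cbda) fun _ ↦ bdac) fun _ ↦ abcd

/-- Conditions on the block sizes under which the manipulator `abcd` gets `b` elected by voting
`bacd`, whereas `d` can win once `k` copies of her truthful ballot are added. By the first five,
the manipulation makes `a`, `c`, `d` lose in this order; by the last three, `b`, `c`, `a` can lose
in this order under the truthful votes. -/
structure ManipulableBlocks (k d c b a : ℕ) : Prop where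
  a_le_b : a ≤ b
  a_lt_c : a < c
  c_le_b_add_a : c ≤ b + a
  c_lt_d : c < d
  d_le_c_add_b_add_a : d ≤ c + b + a
  b_le_c : b ≤ c
  c_le_a_add_one_add_k : c ≤ a + 1 + k
  a_add_one_add_k_le : a + 1 + k ≤ d + c + b

variable {k d c b a : ℕ}

@[simp]
theorem restrScore_blockProfile (d c b a : ℕ) (A : Finset (Fin 4)) (x : Fin 4) :
    restrScore (blockProfile d c b a) A x =
      (((if ∀ y ∈ A, dbca x ≤ dbca y then d else 0) +
        if ∀ y ∈ A, cbda x ≤ cbda y then c else 0) +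
        if ∀ y ∈ A, bdac x ≤ bdac y then b else 0) +
        if ∀ y ∈ A, abcd x ≤ abcd y then a else 0 := by
  simp only [blockProfile, restrScore_append, restrScore_const]

theorem irv_snoc_blockProfile_bacd (h : ManipulableBlocks k d c b a) :
    irv 4 _ (Fin.snoc (blockProfile d c b a) bacd : Profile 4 (d + c + b + a + 1)) = {1} := by
  set P : Profile 4 (d + c + b + a + 1) := Fin.snoc (blockProfile d c b a) bacd
  have h₀₁₂₃ : restrScore P univ = ![a, b + 1, c, d] := by
    funext x; fin_cases x <;> simp +decide [P]
  have h₁₂₃ : restrScore P {1, 2, 3} = ![a, b + a + 1, c, d] := by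
    funext x; fin_cases x <;> simp +decide [P]
  have h₁₃ : restrScore P {1, 3} = ![a, c + b + a + 1, c, d] := by
    funext x; fin_cases x <;> simp +decide [P]
  obtain ⟨_, _, _, _, _, _, _, _⟩ := h
  calc irvAux P univ
      = irvAux P {1, 2, 3} := irvAux_eq_erase_of_forall_lt (e := 0) (by decide) (by decide) <| by
        simpa [h₀₁₂₃, Fin.forall_fin_succ] using (by omega : a < b + 1 ∧ a < c ∧ a < d)
    _ = irvAux P {1, 3} := irvAux_eq_erase_of_forall_lt (e := 2) (by decide) (by decide) <| by
        simpa [h₁₂₃] using (by omega : c < b + a + 1 ∧ c < d)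
    _ = irvAux P {1} := irvAux_eq_erase_of_forall_lt (e := 3) (by decide) (by decide) <| by
        simpa [h₁₃] using (by omega : d < c + b + a + 1)
    _ = {1} := irvAux_of_card_le_one P (by decide)

theorem three_mem_irv_addCopies (h : ManipulableBlocks k d c b a) :
    3 ∈ irv 4 _ (addCopies (Fin.snoc (blockProfile d c b a) abcd : Profile 4 (d + c + b + a + 1))
      (Fin.last _) k) := by
  set P := addCopies (Fin.snoc (blockProfile d c b a) abcd : Profile 4 (d + c + b + a + 1))
    (Fin.last _) k
  have h₀₁₂₃ : restrScore P univ = ![a + 1 + k, b, c, d] := by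
    funext x; fin_cases x <;> simp +decide [P]
  have h₀₂₃ : restrScore P {0, 2, 3} = ![a + 1 + k, b, c, d + b] := by
    funext x; fin_cases x <;> simp +decide [P]
  have h₀₃ : restrScore P {0, 3} = ![a + 1 + k, c + b, c, d + c + b] := by
    funext x; fin_cases x <;> simp +decide [P]
  obtain ⟨_, _, _, _, _, _, _, _⟩ := h
  have hlose_b : IsPluralityLoser P univ 1 := ⟨by decide, by
    simpa [h₀₁₂₃, Fin.forall_fin_succ] using (by omega : b ≤ a + 1 + k ∧ b ≤ c ∧ b ≤ d)⟩
  have hlose_c : IsPluralityLoser P {0, 2, 3} 2 := ⟨by decide, by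
    simpa [h₀₂₃] using (by omega : c ≤ a + 1 + k ∧ c ≤ d + b)⟩
  have hlose_a : IsPluralityLoser P {0, 3} 0 := ⟨by decide, by
    simpa [h₀₃] using (by omega : a + 1 + k ≤ d + c + b)⟩
  have hwin_d : 3 ∈ irvAux P {3} := by simp [irvAux_of_card_le_one]
  have hwin_da : 3 ∈ irvAux P {0, 3} := (mem_irvAux_iff (by decide)).2 ⟨0, hlose_a, hwin_d⟩
  have hwin_dca : 3 ∈ irvAux P {0, 2, 3} := (mem_irvAux_iff (by decide)).2 ⟨2, hlose_c, hwin_da⟩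
  exact (mem_irvAux_iff (by decide)).2 ⟨1, hlose_b, hwin_dca⟩

theorem not_kASP_irv_four (h : ManipulableBlocks k d c b a) :
    ¬ kASP 4 (d + c + b + a + 1) (irv 4) k := by
  intro hASP
  have hd : ∀ x, dbca 3 ≤ dbca x := by decide
  have hle := hASP dbca (Fin.snoc (blockProfile d c b a) abcd) (Fin.last _) bacd
  rw [tiebreak_eq_of_forall_le (three_mem_irv_addCopies h) fun x _ ↦ hd x, Fin.update_snoc_last,
    irv_snoc_blockProfile_bacd h, tiebreak_singleton, Fin.snoc_last] at hle
  exact absurd hle (by decide)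

theorem exists_manipulableBlocks {N : ℕ} (hN : 4 ∣ N ∨ 10 ≤ N) (hk : k < N) :
    ∃ d c b a, N = d + c + b + a ∧ ManipulableBlocks k d c b a := by
  set t := (N + 3) / 4
  -- The condition `c ≤ a + 1 + k` asks for `a ≥ c - 1 - k`; each case takes the least such `a`.
  rcases le_or_gt t (k + 1) with hkt | hkt
  · exact ⟨N - 2 * t, t, t, 0, by omega, by constructor <;> omega⟩
  by_cases hk0 : 0 < k ∨ 4 * t ≤ N + 1
  · exact ⟨N - (t + max (t - 1 - k) (k + 1) + (t - 1 - k)), t, max (t - 1 - k) (k + 1), t - 1 - k,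
      by omega, by constructor <;> omega⟩
  · exact ⟨N - (t - 1 + (t - 1) + (t - 2)), t - 1, t - 1, t - 2,
      by omega, by constructor <;> omega⟩

end FourCandidates

theorem not_kASP_irv {m n k : ℕ} [NeZero m] (hm : 4 ≤ m) (hn : 4 ∣ n - 1 ∨ 11 ≤ n)
    (hk : k < n - 1) : ¬ kASP m n (irv m) k := by
  obtain ⟨d, c, b, a, hsum, hblocks⟩ := exists_manipulableBlocks (hn.imp_right (by omega)) hk
  obtain rfl : n = d + c + b + a + 1 := by omega
  exact fun h ↦ not_kASP_irv_four hblocks (h.of_le hm)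

theorem irv_manipPot_eq_general (m n : ℕ) [NeZero m] (hm : 4 ≤ m) (hn : 4 ∣ n - 1 ∨ 11 ≤ n) :
    (∀ k : ℕ, k < n - 1 → ¬ kASP m n (irv m) k) ∧
      manipPot m n (irv m) = ((n - 1 : ℕ) : ℕ∞) :=
  have hlt : ∀ k < n - 1, ¬ kASP m n (irv m) k := fun _ ↦ not_kASP_irv hm hn
  ⟨hlt, manipPot_eq_of_kASP (fun _ hk ↦ (irv_majorityConsistent m).kASP (by omega)) hlt⟩

/-- For `m ≥ 4`, `n ≥ 5` with `4 ∣ n − 1`: Instant Runoff is not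
`k`-augmentation strategyproof for any `0 ≤ k < n − 1`, and (being majority-consistent)
its manipulation potential is exactly `n − 1`. -/
theorem irv_manipPot_eq (m n : ℕ) [NeZero m] (hm : 4 ≤ m) (hn : 5 ≤ n)
    (hdvd : 4 ∣ (n - 1)) :
    (∀ k : ℕ, k < n - 1 → ¬ kASP m n (irv m) k) ∧
      manipPot m n (irv m) = ((n - 1 : ℕ) : ℕ∞) :=
  irv_manipPot_eq_general m n hm (.inl hdvd)
end
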